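/- arXiv:1811.11949 — 2 statements merged into one kernel-verified Lean document; each statement's English description precedes it below -/
import Mathlib

section
/- Let q be a power of 3 with q ≥ 27, let k be a nonsquare in F_q^*, and let E(Y) in F_q[Y] be a nonzero polynomial of degree at most 4. Suppose that for every y in F_q with E(y) ≠ 0 (with finitely many exceptions, at most 5 exceptional values y allowed), E(y) is a square in F_q^*. More precisely: assume E(Y) ≠ 0 and there is a polynomial C(Y) of degree ≤ 1 with C(Y) ≠ 0 such that for every y in F_q with C(y)E(y) ≠ 0, E(y) is a square in F_q^*. Then there exists D(Y) in F_q[Y] such that E(Y) = D(Y)^2. -/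
/-!
Write `q = 2m + 1` for the size of the field, `L = X ^ q - X` and `Z = E ^ (m + 1)`. Since
`E ^ q = E(X ^ q) = E(X + L)`, we have `Z ^ 2 = E · E(X + L)`, so `Z` is a square root of
`E · E(X + L)`. Where `E` takes nonzero square values this root is `E + L E' / 2` modulo `L ^ 2`;
clearing the exceptional points by a factor `M` gives `2 M Z = M (2 E + L E') + L ^ 2 N` with `N` of
small degree. Squaring yields an identity between two polynomials in `L` all of whose coefficients
have degree less than `q = deg L`, so `L` may be replaced by an indeterminate `T`, and then by
`T = y - X` for a point `y` at which `E(y) = t ^ 2 ≠ 0`. The identity now reads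
`4 M ^ 2 E t ^ 2 = (⋯) ^ 2`, which makes `E` a square.
-/

open Polynomial

section CommSemiring

variable {R : Type*} [CommSemiring R]

lemma taylor_X_map_C_coeff (f : R[X]) (i : ℕ) : (taylor X (f.map C)).coeff i = hasseDeriv i f := by
  rw [taylor_coeff]
  induction f using Polynomial.induction_on' with
  | add f g hf hg => simp only [Polynomial.map_add, map_add, eval_add, hf, hg]
  | monomial k a =>
    rw [map_monomial, hasseDeriv_monomial, hasseDeriv_monomial, eval_monomial,
      ← C_mul_X_pow_eq_monomial, C_mul, map_natCast]

lemma comp_X_add_eq_sum_hasseDeriv (f T : R[X]) {n : ℕ} (hn : f.natDegree < n) :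
    f.comp (X + T) = ∑ i ∈ Finset.range n, hasseDeriv i f * T ^ i := by
  calc f.comp (X + T) = (taylor X (f.map C)).eval T := by
        rw [taylor_eval, eval_map, add_comm, comp]
    _ = ∑ i ∈ Finset.range n, hasseDeriv i f * T ^ i := by
        rw [eval_eq_sum_range' ((natDegree_taylor _ _).trans_lt (natDegree_map_le.trans_lt hn))]
        simp only [taylor_X_map_C_coeff]

lemma comp_X_add_of_natDegree_le_four {f : R[X]} (hf : f.natDegree ≤ 4) (T : R[X]) :
    f.comp (X + T) = f + derivative f * T + hasseDeriv 2 f * T ^ 2 + hasseDeriv 3 f * T ^ 3 +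
      hasseDeriv 4 f * T ^ 4 := by
  simp [comp_X_add_eq_sum_hasseDeriv f T (Nat.lt_succ_of_le hf), Finset.sum_range_succ]

end CommSemiring

section CommRing

variable {R : Type*} [CommRing R]

-- In `R` the exponent `m + 1` is `1 / 2`: differentiating `h` yields the term of order one.
lemma sq_dvd_of_dvd_mul_pow_succ_sub {E A L : R[X]} {m : ℕ} (hm : (2 * m + 1 : R) = 0)
    (hL : derivative L = -1) (h : L ∣ A * (E ^ (m + 1) - E)) :
    L ^ 2 ∣ A ^ 2 * E * (2 * E ^ (m + 1) - (2 * E + L * derivative E)) := by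
  obtain ⟨H, hH⟩ := h
  have hm' : (2 * m + 1 : R[X]) = 0 := by
    simpa only [map_add, map_mul, map_natCast, map_ofNat, map_one, map_zero] using congrArg C hm
  have hderiv : derivative A * (E ^ (m + 1) - E) +
      A * ((m + 1) * E ^ m * derivative E - derivative E) = -H + L * derivative H := by
    simpa [hL, derivative_pow_succ] using congrArg derivative hH
  refine ⟨2 * E * (A * derivative H - derivative A * H) - A * derivative E * H, ?_⟩
  linear_combination (2 * A * E - L * (2 * E * derivative A + A * derivative E)) * hH +
    2 * E * A * L * hderiv - A ^ 2 * L * E ^ (m + 1) * derivative E * hm'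

end CommRing

section IsDomain

variable {R : Type*} [CommRing R] [IsDomain R]

lemma isSquare_of_isSquare_sq_mul [IsIntegrallyClosed R] {a b : R} (ha : a ≠ 0)
    (h : IsSquare (a ^ 2 * b)) : IsSquare b := by
  obtain ⟨c, hc⟩ := h.exists_sq
  obtain ⟨d, rfl⟩ := (IsIntegrallyClosed.pow_dvd_pow_iff two_ne_zero).1 (hc ▸ dvd_mul_right _ b)
  exact ⟨d, mul_left_cancel₀ (pow_ne_zero 2 ha) (by rw [hc]; ring)⟩

lemma eq_zero_and_eq_zero_of_add_mul_eq_zero {A B L : R[X]} (hA : A.natDegree < L.natDegree)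
    (h : A + L * B = 0) : A = 0 ∧ B = 0 := by
  have hA0 : A = 0 := eq_zero_of_dvd_of_natDegree_lt ⟨-B, by linear_combination h⟩ hA
  have hL0 : L ≠ 0 := ne_zero_of_natDegree_gt hA
  exact ⟨hA0, by simpa [hA0, hL0] using h⟩

lemma sq_eq_mul_comp_X_add_of_natDegree_lt {E M N L : R[X]} {d : ℕ} (hE : E.natDegree ≤ 4)
    (hM : M.natDegree ≤ d) (hN : N.natDegree ≤ d + 2) (hd : 2 * d + 6 < L.natDegree)
    (h : (M * (2 * E + L * derivative E) + L ^ 2 * N) ^ 2 = 4 * M ^ 2 * E * E.comp (X + L))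
    (T : R[X]) :
    (M * (2 * E + T * derivative E) + T ^ 2 * N) ^ 2 = 4 * M ^ 2 * E * E.comp (X + T) := by
  have hdeg (i : ℕ) : (hasseDeriv i E).natDegree ≤ 4 - i :=
    (natDegree_hasseDeriv_le E i).trans (Nat.sub_le_sub_right hE i)
  have hdeg₁ : (derivative E).natDegree ≤ 3 := by simpa using hdeg 1
  have hdeg₂ := hdeg 2
  have hdeg₃ := hdeg 3
  let P₂ := M ^ 2 * (derivative E ^ 2 - 4 * (E * hasseDeriv 2 E)) + 4 * (M * (N * E))
  let P₃ := 2 * (M * (N * derivative E)) - 4 * (M ^ 2 * (E * hasseDeriv 3 E))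
  let P₄ := N ^ 2 - 4 * (M ^ 2 * (E * hasseDeriv 4 E))
  have expansion (S : R[X]) :
      (M * (2 * E + S * derivative E) + S ^ 2 * N) ^ 2 - 4 * M ^ 2 * E * E.comp (X + S) =
        S ^ 2 * (P₂ + S * (P₃ + S * P₄)) := by
    rw [comp_X_add_of_natDegree_le_four hE]
    ring
  have hP₂ : P₂.natDegree ≤ 2 * d + 6 := by
    dsimp only [P₂]
    compute_degree
    omega
  have hP₃ : P₃.natDegree ≤ 2 * d + 6 := by
    dsimp only [P₃]
    compute_degree
    omega
  have hL0 : L ≠ 0 := ne_zero_of_natDegree_gt hd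
  have hL : P₂ + L * (P₃ + L * P₄) = 0 := by
    simpa [sub_eq_zero.2 h, hL0] using expansion L
  obtain ⟨h₂, h₃₄⟩ := eq_zero_and_eq_zero_of_add_mul_eq_zero (hP₂.trans_lt hd) hL
  obtain ⟨h₃, h₄⟩ := eq_zero_and_eq_zero_of_add_mul_eq_zero (hP₃.trans_lt hd) h₃₄
  rw [← sub_eq_zero, expansion, h₂, h₃, h₄]
  ring

lemma natDegree_le_of_mul_eq_sq_mul {E M N L : R[X]} {m d : ℕ} (hE : E.natDegree ≤ 4)
    (hM : M.natDegree ≤ d) (hL : L.natDegree = 2 * m + 1)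
    (h : M * (2 * E ^ (m + 1) - (2 * E + L * derivative E)) = L ^ 2 * N) :
    N.natDegree ≤ d + 2 := by
  obtain rfl | hN := eq_or_ne N 0
  · simp
  have hL0 : L ≠ 0 := by
    rintro rfl
    simp at hL
  have hE' : (derivative E).natDegree ≤ 3 :=
    (natDegree_derivative_le E).trans (Nat.sub_le_sub_right hE 1)
  have hlhs : (M * (2 * E ^ (m + 1) - (2 * E + L * derivative E))).natDegree ≤
      d + 4 * (m + 1) := by
    have hpow : (m + 1) * E.natDegree ≤ (m + 1) * 4 := Nat.mul_le_mul_left _ hE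
    compute_degree
    omega
  rw [h, natDegree_mul (pow_ne_zero 2 hL0) hN, natDegree_pow, hL] at hlhs
  omega

end IsDomain

section Field

variable {F : Type*} [Field F]

lemma isSquare_of_sq_eq_mul_comp {E M G : F[X]} {y : F} (h2 : (2 : F) ≠ 0) (hM : M ≠ 0)
    (hy : E.eval y ≠ 0) (hsq : IsSquare (E.eval y))
    (h : G ^ 2 = 4 * M ^ 2 * E * E.comp (C y)) : IsSquare E := by
  obtain ⟨t, ht⟩ := hsq.exists_sq
  have ht0 : t ≠ 0 := by
    rintro rfl
    simp [ht] at hy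
  have hconst : C (2 * t) ≠ 0 := C_ne_zero.2 (mul_ne_zero h2 ht0)
  refine isSquare_of_isSquare_sq_mul (mul_ne_zero hM hconst) ((isSquare_iff_exists_sq _).2 ⟨G, ?_⟩)
  rw [h, comp_C, ht, C_mul, C_pow, map_ofNat]
  ring

end Field

section FiniteField

variable {F : Type*} [Field F] [Fintype F]

lemma X_pow_card_sub_X_dvd_of_forall_eval_eq_zero {f : F[X]} (hf : ∀ a, f.eval a = 0) :
    X ^ Fintype.card F - X ∣ f := by
  obtain rfl | hf0 := eq_or_ne f 0
  · exact dvd_zero _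
  have hroots := FiniteField.roots_X_pow_card_sub_X F
  have hsplits : (X ^ Fintype.card F - X : F[X]).Splits := by
    rw [splits_iff_card_roots, hroots, Finset.card_val, Finset.card_univ,
      FiniteField.X_pow_card_sub_X_natDegree_eq F Fintype.one_lt_card]
  refine hsplits.dvd_of_roots_le_roots
    (FiniteField.X_pow_card_sub_X_ne_zero F Fintype.one_lt_card) ?_
  rw [hroots, Multiset.le_iff_subset Finset.univ.nodup]
  exact fun a _ ↦ (mem_roots hf0).2 (hf a)

lemma X_pow_card_sub_X_dvd_mul_pow_succ_sub (hF : ringChar F ≠ 2) {E A : F[X]}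
    (h : ∀ y, (A * E).eval y ≠ 0 → IsSquare (E.eval y)) :
    X ^ Fintype.card F - X ∣ A * (E ^ (Fintype.card F / 2 + 1) - E) := by
  refine X_pow_card_sub_X_dvd_of_forall_eval_eq_zero fun y ↦ ?_
  by_cases hy : (A * E).eval y = 0
  · simp only [eval_mul] at hy
    simp only [eval_mul, eval_sub, eval_pow]
    linear_combination ((E.eval y) ^ (Fintype.card F / 2) - 1) * hy
  · have hE : E.eval y ≠ 0 := right_ne_zero_of_mul (eval_mul (R := F) ▸ hy)
    simp [pow_succ, (FiniteField.isSquare_iff hF hE).1 (h y hy)]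

lemma pow_card_half_add_one_sq (hF : ringChar F ≠ 2) (E : F[X]) :
    (E ^ (Fintype.card F / 2 + 1)) ^ 2 = E * E.comp (X + (X ^ Fintype.card F - X)) := by
  rw [add_sub_cancel, ← expand_eq_comp_X_pow, FiniteField.expand_card, ← pow_mul, ← pow_succ']
  congr 1
  have := FiniteField.odd_card_of_char_ne_two hF
  omega

lemma exists_sq_eq_mul_comp_X_add (hF : ringChar F ≠ 2) {E A : F[X]} (hE : E.natDegree ≤ 4)
    (h : ∀ y, (A * E).eval y ≠ 0 → IsSquare (E.eval y)) :
    ∃ N : F[X], N.natDegree ≤ 2 * A.natDegree + 6 ∧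
      (A ^ 2 * E * (2 * E + (X ^ Fintype.card F - X) * derivative E) +
          (X ^ Fintype.card F - X) ^ 2 * N) ^ 2 =
        4 * (A ^ 2 * E) ^ 2 * E * E.comp (X + (X ^ Fintype.card F - X)) := by
  have hZ := pow_card_half_add_one_sq hF E
  have hdvd := X_pow_card_sub_X_dvd_mul_pow_succ_sub hF h
  have hdeg := FiniteField.X_pow_card_sub_X_natDegree_eq F (Fintype.one_lt_card (α := F))
  have hderiv : derivative (X ^ Fintype.card F - X : F[X]) = -1 := by
    simp [derivative_X_pow]
  set L : F[X] := X ^ Fintype.card F - X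
  set m := Fintype.card F / 2
  have hq : Fintype.card F = 2 * m + 1 := by
    have := FiniteField.odd_card_of_char_ne_two hF
    omega
  have hq0 : (2 * m + 1 : F) = 0 := by exact_mod_cast hq ▸ FiniteField.cast_card_eq_zero F
  obtain ⟨N, hN⟩ := sq_dvd_of_dvd_mul_pow_succ_sub hq0 hderiv hdvd
  have hM : (A ^ 2 * E).natDegree ≤ 2 * A.natDegree + 4 :=
    natDegree_mul_le_of_le natDegree_pow_le hE
  refine ⟨N, natDegree_le_of_mul_eq_sq_mul hE hM (hdeg.trans hq) hN, ?_⟩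
  rw [mul_assoc (4 * (A ^ 2 * E) ^ 2), ← hZ, ← hN]
  ring

theorem stmt2_general (hF : ringChar F ≠ 2) {E A : F[X]} (hE : E.natDegree ≤ 4) (hA : A ≠ 0)
    (hcard : 4 * A.natDegree + 14 < Fintype.card F)
    (h : ∀ y, (A * E).eval y ≠ 0 → IsSquare (E.eval y)) : IsSquare E := by
  obtain rfl | hE0 := eq_or_ne E 0
  · exact IsSquare.zero
  have hM : (A ^ 2 * E).natDegree ≤ 2 * A.natDegree + 4 :=
    natDegree_mul_le_of_le natDegree_pow_le hE
  obtain ⟨N, hN, hsq⟩ := exists_sq_eq_mul_comp_X_add hF hE h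
  obtain ⟨y, hy⟩ : ∃ y, (A * E).eval y ≠ 0 := by
    refine exists_eval_ne_zero_of_natDegree_lt_card _ (mul_ne_zero hA hE0) ?_
    have hAE : (A * E).natDegree ≤ A.natDegree + 4 := natDegree_mul_le_of_le le_rfl hE
    rw [Cardinal.mk_fintype, Nat.cast_lt]
    omega
  have hLdeg : 2 * (2 * A.natDegree + 4) + 6 < (X ^ Fintype.card F - X : F[X]).natDegree := by
    rw [FiniteField.X_pow_card_sub_X_natDegree_eq F Fintype.one_lt_card]
    omega
  have hT := sq_eq_mul_comp_X_add_of_natDegree_lt hE hM hN hLdeg hsq (C y - X)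
  rw [add_sub_cancel] at hT
  exact isSquare_of_sq_eq_mul_comp (Ring.two_ne_zero hF) (mul_ne_zero (pow_ne_zero 2 hA) hE0)
    (right_ne_zero_of_mul (eval_mul (R := F) ▸ hy)) (h y hy) hT

end FiniteField

/-- If q = 3^n ≥ 27, k a nonsquare in F_q^*, E ≠ 0 of degree ≤ 4,
C ≠ 0 of degree ≤ 1, and E(y) is a nonzero square for every y with C(y)E(y) ≠ 0,
then E is the square of a polynomial. -/
theorem stmt2 (n : ℕ) (hn : 3 ≤ n)
    (F : Type*) [Field F] [Fintype F] (hcard : Fintype.card F = 3 ^ n)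
    (k : F) (hk0 : k ≠ 0) (hk : ¬ ∃ t : F, k = t ^ 2)
    (E C : Polynomial F) (hE0 : E ≠ 0) (hEdeg : E.natDegree ≤ 4)
    (hC0 : C ≠ 0) (hCdeg : C.natDegree ≤ 1)
    (hsq : ∀ y : F, C.eval y * E.eval y ≠ 0 → ∃ t : F, t ≠ 0 ∧ E.eval y = t ^ 2) :
    ∃ D : Polynomial F, E = D ^ 2 := by
  have hF : ringChar F ≠ 2 := fun h2 ↦ hk (FiniteField.isSquare_of_char_two h2 k).exists_sq
  have hq : 3 ^ 3 ≤ Fintype.card F := hcard ▸ Nat.pow_le_pow_right three_pos hn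
  refine (stmt2_general hF hEdeg hC0 (by omega) fun y hy ↦ ?_).exists_sq
  obtain ⟨t, -, ht⟩ := hsq y (eval_mul (R := F) ▸ hy)
  exact ⟨t, ht.trans (sq t)⟩
end

section
/- (Main theorem, characteristic 3) Let q = 3^n and let f(X) = X(1 + aX^{q(q-1)} + bX^{2(q-1)}) with a, b in F_{q^2}^*. Then f is a permutation polynomial of F_{q^2} if and only if (ab)^q = a(b^{q+1} - a^{q+1}) and 1 - (b/a)^{q+1} is a nonzero square in F_q^*. -/
/-!
With `q = 3 ^ n`, write `star x = x ^ q`, so that the unit circle `x * star x = 1` is the group of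
`(q + 1)`-th roots of unity. Our map is `x * h (star x / x)` with `h u = 1 + a / u + b * u ^ 2`.
It is a permutation iff `h` has no zero on the unit circle and `u ↦ u * star (h u) / h u` permutes
the circle. The point `u` lies in the fiber over `t` iff `v = u / t` is a root of
`B * v ^ 3 + v ^ 2 - v - star B`, where `B = star a * t - b * t ^ 2`. In characteristic `3` the
Cayley transform `v = (1 + δ) / (1 - δ)` turns this cubic into `E * δ ^ 3 - δ = star B - B` with
`E = 1 + B + star B`. The left side is additive in `δ`, and the cubic has exactly one root on the
circle iff `E` is a nonzero square of the subfield of order `q`.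

So our map is a permutation iff `E t` is such a square for every `t` on the circle. Then
`E t ^ ((q - 1) / 2) = 1` on the circle, which is a congruence modulo `X ^ (q + 1) - 1`. Multiplying
it by `E ^ 2` makes the exponent `(q + 3) / 2` divisible by `3` (for `q > 3`), so the left side is a
cube with few nonzero coefficients, and comparing two of them yields the equation in `a` and `b`.
Conversely, this equation makes `E t` the product of `1 - (b / a) ^ (q + 1)` and the square of an
element of the subfield, which does not vanish if the first factor is a nonzero square there.
-/

open Polynomial

namespace PermTrinomial

section Cayley

variable {F : Type*} [Field F]

/-- The Cayley transform, which maps the skew-adjoint elements onto the unit circle without `-1`. -/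
def cayley (δ : F) : F := (1 + δ) / (1 - δ)

lemma eq_of_cayley_eq (h2 : (2 : F) ≠ 0) {δ ε : F} (hδ : 1 - δ ≠ 0) (hε : 1 - ε ≠ 0)
    (h : cayley δ = cayley ε) : δ = ε := by
  rw [cayley, cayley, div_eq_div_iff hδ hε] at h
  exact mul_left_cancel₀ h2 (by linear_combination h)

end Cayley

section Involution

variable {F : Type*} [Field F] [StarRing F]

lemma star_eq_inv_of_mem_unitary {u : F} (hu : u ∈ unitary F) : star u = u⁻¹ :=
  eq_inv_of_mul_eq_one_left (Unitary.star_mul_self_of_mem hu)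

lemma ne_zero_of_mem_unitary {u : F} (hu : u ∈ unitary F) : u ≠ 0 :=
  right_ne_zero_of_mul_eq_one (Unitary.star_mul_self_of_mem hu)

lemma star_div_self_mem_unitary {x : F} (hx : x ≠ 0) : star x / x ∈ unitary F := by
  have hx' : star x ≠ 0 := star_ne_zero.mpr hx
  rw [Unitary.mem_iff_self_mul_star, star_div₀, star_star]
  field_simp

lemma div_mem_unitary {u v : F} (hu : u ∈ unitary F) (hv : v ∈ unitary F) :
    u / v ∈ unitary F := by
  rw [div_eq_mul_inv, ← star_eq_inv_of_mem_unitary hv]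
  exact mul_mem hu (Unitary.star_mem hv)

/-- Hilbert's Theorem 90 for the quadratic extension of `F` over the fixed field of `star`. -/
lemma exists_star_div_self_eq (hstar : ∃ g : F, star g ≠ g) {u : F} (hu : u ∈ unitary F) :
    ∃ x : F, x ≠ 0 ∧ star x / x = u := by
  obtain ⟨z, hz⟩ : ∃ z : F, z + star u * star z ≠ 0 := by
    by_contra! h
    have hu' : star u = -1 := by simpa [add_eq_zero_iff_eq_neg'] using h 1
    obtain ⟨g, hg⟩ := hstar
    exact hg (by linear_combination star g * hu' - h g)
  refine ⟨_, hz, (div_eq_iff hz).mpr ?_⟩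
  simp only [star_add, star_mul', star_star]
  linear_combination -star z * Unitary.mul_star_self_of_mem hu

/-- The self-map `u ↦ u * h(u)^(q - 1)` of the unit circle induced by `x ↦ x * h(x^(q - 1))`, with
`star` in the role of the `q`-th power. It takes the junk value `0` at the zeros of `h`. -/
def circleMap (h : F → F) (u : F) : F := u * star (h u) / h u

lemma circleMap_mem_unitary {h : F → F} {u : F} (hu : u ∈ unitary F) (hh : h u ≠ 0) :
    circleMap h u ∈ unitary F := by
  rw [circleMap, mul_div_assoc]
  exact mul_mem hu (star_div_self_mem_unitary hh)

lemma star_div_self_mul_comp (h : F → F) (x : F) :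
    star (x * h (star x / x)) / (x * h (star x / x)) = circleMap h (star x / x) := by
  rw [circleMap, star_mul', mul_div_mul_comm, mul_div_assoc]

lemma ne_zero_of_injective_mul_comp (hstar : ∃ g : F, star g ≠ g) {h : F → F}
    (hinj : Function.Injective (fun x ↦ x * h (star x / x))) {u : F} (hu : u ∈ unitary F) :
    h u ≠ 0 := by
  intro hu0
  obtain ⟨x, hx, rfl⟩ := exists_star_div_self_eq hstar hu
  exact hx (hinj (by simp [hu0]))

lemma injOn_circleMap_of_injective_mul_comp (hstar : ∃ g : F, star g ≠ g) {h : F → F}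
    (hinj : Function.Injective (fun x ↦ x * h (star x / x))) :
    Set.InjOn (circleMap h) (unitary F) := by
  intro u hu v hv huv
  have hu0 := ne_zero_of_injective_mul_comp hstar hinj hu
  have hv0 := ne_zero_of_injective_mul_comp hstar hinj hv
  obtain ⟨x, hx, rfl⟩ := exists_star_div_self_eq hstar hu
  obtain ⟨y, hy, rfl⟩ := exists_star_div_self_eq hstar hv
  set X := x * h (star x / x) with hX
  set Y := y * h (star y / y) with hY
  have hX0 : X ≠ 0 := mul_ne_zero hx hu0
  have hY0 : Y ≠ 0 := mul_ne_zero hy hv0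
  -- The scalar `X / Y` is fixed by `star`, so it can be moved inside the map.
  have hXY : star (X / Y) = X / Y := by
    rw [← star_div_self_mul_comp, ← star_div_self_mul_comp, ← hX, ← hY] at huv
    rw [star_div₀, div_eq_div_iff (star_ne_zero.mpr hY0) hY0]
    linear_combination (div_eq_div_iff hX0 hY0).mp huv
  have hratio : star (X / Y * y) / (X / Y * y) = star y / y := by
    rw [star_mul', hXY, mul_div_mul_left _ _ (div_ne_zero hX0 hY0)]
  have hxy : X / Y * y = x := hinj <| by
    change X / Y * y * h (star (X / Y * y) / (X / Y * y)) = X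
    rw [hratio, mul_assoc, ← hY, div_mul_cancel₀ _ hY0]
  rw [← hratio, hxy]

lemma injective_mul_comp_of_injOn_circleMap {h : F → F} (hne : ∀ u ∈ unitary F, h u ≠ 0)
    (hinj : Set.InjOn (circleMap h) (unitary F)) :
    Function.Injective (fun x ↦ x * h (star x / x)) := by
  intro x y hxy
  have apply_ne_zero {z : F} (hz : z ≠ 0) : z * h (star z / z) ≠ 0 :=
    mul_ne_zero hz (hne _ (star_div_self_mem_unitary hz))
  dsimp only at hxy
  by_cases hx : x = 0
  · by_contra! hy
    exact apply_ne_zero (hx ▸ hy.symm) (by rw [← hxy, hx, zero_mul])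
  by_cases hy : y = 0
  · exact (apply_ne_zero hx (by rw [hxy, hy, zero_mul])).elim
  have hu := star_div_self_mem_unitary hx
  have huv : star x / x = star y / y := hinj hu (star_div_self_mem_unitary hy) <| by
    rw [← star_div_self_mul_comp, ← star_div_self_mul_comp, hxy]
  rw [← huv] at hxy
  exact mul_right_cancel₀ (hne _ hu) hxy

theorem injective_mul_comp_star_div_self_iff (hstar : ∃ g : F, star g ≠ g) (h : F → F) :
    Function.Injective (fun x ↦ x * h (star x / x)) ↔
      (∀ u ∈ unitary F, h u ≠ 0) ∧ Set.InjOn (circleMap h) (unitary F) :=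
  ⟨fun hinj ↦ ⟨fun _ ↦ ne_zero_of_injective_mul_comp hstar hinj,
    injOn_circleMap_of_injective_mul_comp hstar hinj⟩,
    fun ⟨hne, hinj⟩ ↦ injective_mul_comp_of_injOn_circleMap hne hinj⟩

lemma one_sub_ne_zero_of_mem_skewAdjoint (h2 : (2 : F) ≠ 0) {δ : F} (hδ : δ ∈ skewAdjoint F) :
    1 - δ ≠ 0 := by
  intro h
  obtain rfl : δ = 1 := by linear_combination -h
  rw [skewAdjoint.mem_iff, star_one] at hδ
  exact h2 (by linear_combination hδ)

lemma cayley_mem_unitary (h2 : (2 : F) ≠ 0) {δ : F} (hδ : δ ∈ skewAdjoint F) :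
    cayley δ ∈ unitary F := by
  have hsub := one_sub_ne_zero_of_mem_skewAdjoint h2 hδ
  have hadd : 1 + δ ≠ 0 := by
    simpa using one_sub_ne_zero_of_mem_skewAdjoint h2 (neg_mem hδ)
  rw [skewAdjoint.mem_iff] at hδ
  rw [Unitary.mem_iff_self_mul_star, cayley, star_div₀, star_add, star_sub, star_one, hδ]
  rw [← sub_eq_add_neg, sub_neg_eq_add]
  field_simp

lemma exists_cayley_eq (h2 : (2 : F) ≠ 0) {v : F} (hv : v ∈ unitary F) (hv1 : v ≠ -1) :
    ∃ δ ∈ skewAdjoint F, cayley δ = v := by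
  have hv0 := ne_zero_of_mem_unitary hv
  have hadd : v + 1 ≠ 0 := fun h ↦ hv1 (eq_neg_of_add_eq_zero_left h)
  have hadd' : 1 + v ≠ 0 := by rwa [add_comm]
  refine ⟨(v - 1) / (v + 1), ?_, ?_⟩
  · rw [skewAdjoint.mem_iff, star_div₀, star_sub, star_add, star_one, star_eq_inv_of_mem_unitary hv]
    field_simp
    ring
  · have hsub : 1 - (v - 1) / (v + 1) = 2 / (v + 1) := by
      field_simp
      ring
    rw [cayley, hsub]
    field_simp
    ring

/-- `x` is the square of a nonzero element fixed by `star`. When `star` is the `q`-th power on the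
field of order `q ^ 2`, these are the nonzero squares of the subfield of order `q`. -/
def IsSelfAdjointSquare (x : F) : Prop := ∃ c : F, c ≠ 0 ∧ IsSelfAdjoint c ∧ x = c ^ 2

lemma isSelfAdjointSquare_mul_sq_iff {x y : F} (hy : IsSelfAdjoint y) (hy0 : y ≠ 0) :
    IsSelfAdjointSquare (x * y ^ 2) ↔ IsSelfAdjointSquare x := by
  constructor
  · rintro ⟨c, hc0, hc, h⟩
    refine ⟨c / y, div_ne_zero hc0 hy0, hc.div hy, ?_⟩
    rw [div_pow, ← h, mul_div_cancel_right₀ _ (pow_ne_zero 2 hy0)]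
  · rintro ⟨c, hc0, hc, rfl⟩
    exact ⟨c * y, mul_ne_zero hc0 hy0, hc.mul hy, (mul_pow c y 2).symm⟩

lemma IsSelfAdjointSquare.ne_zero {x : F} (hx : IsSelfAdjointSquare x) : x ≠ 0 := by
  obtain ⟨c, hc0, -, rfl⟩ := hx
  exact pow_ne_zero 2 hc0

end Involution

section Cubic

variable {F : Type*} [Field F] [StarRing F]

/-- The cubic whose roots on the unit circle describe the fibers of the circle map, where `B` is the
value of `fiberCoeff` at the point of the circle under consideration. -/
def circleCubic (B v : F) : F := B * v ^ 3 + v ^ 2 - v - star B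

/-- The leading coefficient of `circleCubic B` after the Cayley transform. It decides whether the
cubic has a unique root on the unit circle. -/
def cubicLeadingCoeff (B : F) : F := 1 + B + star B

lemma isSelfAdjoint_cubicLeadingCoeff (B : F) : IsSelfAdjoint (cubicLeadingCoeff B) := by
  rw [cubicLeadingCoeff, add_assoc]
  exact (IsSelfAdjoint.one F).add (.add_star_self B)

variable [CharP F 3]

lemma two_ne_zero_of_charThree (F : Type*) [Field F] [CharP F 3] : (2 : F) ≠ 0 := by
  intro h
  exact one_ne_zero (α := F) (by linear_combination CharP.ofNat_eq_zero F 3 - h)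

lemma circleCubic_neg_one_eq_zero_iff (B : F) :
    circleCubic B (-1) = 0 ↔ cubicLeadingCoeff B = 0 := by
  have h : circleCubic B (-1) = -cubicLeadingCoeff B := by
    rw [circleCubic, cubicLeadingCoeff]
    linear_combination CharP.ofNat_eq_zero F 3
  rw [h, neg_eq_zero]

lemma circleCubic_cayley_eq_zero_iff (B : F) {δ : F} (hδ : 1 - δ ≠ 0) :
    circleCubic B (cayley δ) = 0 ↔ cubicLeadingCoeff B * δ ^ 3 - δ = star B - B := by
  have h : circleCubic B (cayley δ) =
      (cubicLeadingCoeff B * δ ^ 3 - δ - (star B - B)) / (1 - δ) ^ 3 := by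
    rw [circleCubic, cubicLeadingCoeff, cayley]
    field_simp
    linear_combination
      (δ - δ ^ 3 + B * (δ + δ ^ 2) + star B * (δ - δ ^ 2)) * CharP.ofNat_eq_zero F 3
  rw [h, div_eq_zero_iff, or_iff_left (pow_ne_zero 3 hδ), sub_eq_zero]

/-- After the Cayley transform, the difference `γ` of two roots lies in the kernel of the additive
map `γ ↦ s ^ 2 * γ ^ 3 - γ`, so `s * γ ∈ {0, 1, -1}`; but `s * γ` is skew-adjoint. -/
theorem circleCubic_root_unique {B v w : F} (hB : IsSelfAdjointSquare (cubicLeadingCoeff B))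
    (hv : v ∈ unitary F) (hw : w ∈ unitary F) (hv0 : circleCubic B v = 0)
    (hw0 : circleCubic B w = 0) : v = w := by
  have h2 := two_ne_zero_of_charThree F
  have ne_neg_one {x : F} (hx : circleCubic B x = 0) : x ≠ -1 := by
    rintro rfl
    exact hB.ne_zero ((circleCubic_neg_one_eq_zero_iff B).mp hx)
  obtain ⟨δ, hδ, rfl⟩ := exists_cayley_eq h2 hv (ne_neg_one hv0)
  obtain ⟨ε, hε, rfl⟩ := exists_cayley_eq h2 hw (ne_neg_one hw0)
  rw [circleCubic_cayley_eq_zero_iff B (one_sub_ne_zero_of_mem_skewAdjoint h2 hδ)] at hv0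
  rw [circleCubic_cayley_eq_zero_iff B (one_sub_ne_zero_of_mem_skewAdjoint h2 hε)] at hw0
  obtain ⟨s, hs0, hs, hBs⟩ := hB
  rw [hBs] at hv0 hw0
  have hskew : star (s * (δ - ε)) = -(s * (δ - ε)) := by
    rw [star_mul', hs.star_eq, skewAdjoint.mem_iff.mp (sub_mem hδ hε), mul_neg]
  have hker : s * (δ - ε) * (s * (δ - ε) - 1) * (s * (δ - ε) + 1) = 0 := by
    linear_combination s * (hv0 - hw0) -
      s ^ 3 * δ * ε * (δ - ε) * CharP.ofNat_eq_zero F 3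
  have hzero : s * (δ - ε) = 0 := by
    rcases mul_eq_zero.mp hker with h | h
    · rcases mul_eq_zero.mp h with h | h
      · exact h
      · rw [sub_eq_zero.mp h, star_one] at hskew
        exact (h2 (by linear_combination hskew)).elim
    · rw [eq_neg_of_add_eq_zero_left h, star_neg, star_one] at hskew
      exact (h2 (by linear_combination -hskew)).elim
  rw [sub_eq_zero.mp ((mul_eq_zero.mp hzero).resolve_left hs0)]

lemma cubicLeadingCoeff_ne_zero_of_existsUnique {B : F}
    (h : ∃! v, v ∈ unitary F ∧ circleCubic B v = 0) : cubicLeadingCoeff B ≠ 0 := by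
  intro hB
  have h2 := two_ne_zero_of_charThree F
  have hδ : B - star B ∈ skewAdjoint F := by
    rw [skewAdjoint.mem_iff, star_sub, star_star, neg_sub]
  have hne := one_sub_ne_zero_of_mem_skewAdjoint h2 hδ
  have hroot : circleCubic B (cayley (B - star B)) = 0 := by
    rw [circleCubic_cayley_eq_zero_iff B hne, hB]
    ring
  have heq : cayley (B - star B) = -1 := h.unique ⟨cayley_mem_unitary h2 hδ, hroot⟩
    ⟨(-1 : unitary F).2, (circleCubic_neg_one_eq_zero_iff B).mpr hB⟩
  rw [cayley, div_eq_iff hne] at heq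
  exact h2 (by linear_combination heq)

lemma sq_ne_cubicLeadingCoeff_of_existsUnique {B s : F} (hs : s ∈ skewAdjoint F)
    (h : ∃! v, v ∈ unitary F ∧ circleCubic B v = 0) : s ^ 2 ≠ cubicLeadingCoeff B := by
  intro hsB
  have h2 := two_ne_zero_of_charThree F
  have hB := cubicLeadingCoeff_ne_zero_of_existsUnique h
  have hs0 : s ≠ 0 := by
    rintro rfl
    exact hB (by rw [← hsB]; ring)
  obtain ⟨v, ⟨hv, hv0⟩, huniq⟩ := h
  have hv1 : v ≠ -1 := by
    rintro rfl
    exact hB ((circleCubic_neg_one_eq_zero_iff B).mp hv0)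
  obtain ⟨δ, hδ, rfl⟩ := exists_cayley_eq h2 hv hv1
  have hδ1 := one_sub_ne_zero_of_mem_skewAdjoint h2 hδ
  have hε : δ + s⁻¹ ∈ skewAdjoint F := by
    refine add_mem hδ ?_
    rw [skewAdjoint.mem_iff, star_inv₀, skewAdjoint.mem_iff.mp hs, inv_neg]
  have hε1 := one_sub_ne_zero_of_mem_skewAdjoint h2 hε
  have hroot : circleCubic B (cayley (δ + s⁻¹)) = 0 := by
    rw [circleCubic_cayley_eq_zero_iff B hδ1] at hv0
    rw [circleCubic_cayley_eq_zero_iff B hε1, ← hv0, ← hsB]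
    field_simp
    linear_combination s * δ * (s * δ + 1) * CharP.ofNat_eq_zero F 3
  have heq : δ + s⁻¹ = δ :=
    eq_of_cayley_eq h2 hε1 hδ1 (huniq _ ⟨cayley_mem_unitary h2 hε, hroot⟩)
  exact inv_ne_zero hs0 (by linear_combination heq)

theorem isSelfAdjointSquare_cubicLeadingCoeff_of_existsUnique
    (hsq : ∀ z : F, IsSelfAdjoint z → IsSquare z) {B : F}
    (h : ∃! v, v ∈ unitary F ∧ circleCubic B v = 0) :
    IsSelfAdjointSquare (cubicLeadingCoeff B) := by
  have hB := cubicLeadingCoeff_ne_zero_of_existsUnique h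
  have hself := isSelfAdjoint_cubicLeadingCoeff B
  obtain ⟨s, hs⟩ := isSquare_iff_exists_sq _ |>.mp (hsq _ hself)
  have hs0 : s ≠ 0 := by
    rintro rfl
    exact hB (by rw [hs]; ring)
  have hstar : star s ^ 2 = s ^ 2 := by rw [← star_pow, ← hs, hself.star_eq]
  rcases sq_eq_sq_iff_eq_or_eq_neg.mp hstar with hfix | hskew
  · exact ⟨s, hs0, hfix, hs⟩
  · exact (sq_ne_cubicLeadingCoeff_of_existsUnique (skewAdjoint.mem_iff.mpr hskew) h hs.symm).elim

end Cubic

section Trinomial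

variable {F : Type*} [Field F] [StarRing F]

/-- The factor `h` for which the trinomial is `x * h (star x / x)`. -/
def trinomialFactor (a b u : F) : F := 1 + a * u⁻¹ + b * u ^ 2

/-- The parameter `B` for which `v ↦ t * v` carries the roots of `circleCubic B` on the unit circle
to the fiber of the circle map of the trinomial over `t`. -/
def fiberCoeff (a b t : F) : F := star a * t - b * t ^ 2

lemma mul_star_trinomialFactor_sub (a b : F) {t u : F} (ht : t ∈ unitary F) (hu : u ∈ unitary F) :
    u * star (trinomialFactor a b u) - t * trinomialFactor a b u =
      t ^ 2 / u * circleCubic (fiberCoeff a b t) (u / t) := by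
  have ht0 := ne_zero_of_mem_unitary ht
  have hu0 := ne_zero_of_mem_unitary hu
  simp only [trinomialFactor, circleCubic, fiberCoeff, star_add, star_sub, star_one, star_mul',
    star_inv₀, star_pow, star_star, star_eq_inv_of_mem_unitary ht, star_eq_inv_of_mem_unitary hu]
  field_simp
  ring

lemma circleMap_eq_iff_circleCubic_eq_zero {a b t u : F} (ht : t ∈ unitary F) (hu : u ∈ unitary F)
    (hne : trinomialFactor a b u ≠ 0) :
    circleMap (trinomialFactor a b) u = t ↔ circleCubic (fiberCoeff a b t) (u / t) = 0 := by
  have hcoeff : t ^ 2 / u ≠ 0 :=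
    div_ne_zero (pow_ne_zero 2 (ne_zero_of_mem_unitary ht)) (ne_zero_of_mem_unitary hu)
  rw [circleMap, div_eq_iff hne, ← sub_eq_zero, mul_star_trinomialFactor_sub a b ht hu,
    mul_eq_zero_iff_left hcoeff]

variable [CharP F 3]

lemma trinomialFactor_ne_zero {a b u : F} (hu : u ∈ unitary F)
    (hE : cubicLeadingCoeff (fiberCoeff a b (-u)) ≠ 0) : trinomialFactor a b u ≠ 0 := by
  intro h
  have hu0 := ne_zero_of_mem_unitary hu
  have hroot := mul_star_trinomialFactor_sub a b (-(⟨u, hu⟩ : unitary F)).2 hu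
  rw [h, star_zero, mul_zero, mul_zero, sub_zero, Unitary.coe_neg, div_neg, div_self hu0, neg_sq,
    eq_comm, mul_eq_zero_iff_left (div_ne_zero (pow_ne_zero 2 hu0) hu0),
    circleCubic_neg_one_eq_zero_iff] at hroot
  exact hE hroot

theorem bijective_trinomial_iff [Finite F] (hstar : ∃ g : F, star g ≠ g)
    (hsq : ∀ z : F, IsSelfAdjoint z → IsSquare z) (a b : F) :
    Function.Bijective (fun x ↦ x * trinomialFactor a b (star x / x)) ↔
      ∀ t ∈ unitary F, IsSelfAdjointSquare (cubicLeadingCoeff (fiberCoeff a b t)) := by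
  rw [← Finite.injective_iff_bijective, injective_mul_comp_star_div_self_iff hstar]
  constructor
  · rintro ⟨hne, hinj⟩ t ht
    have hmaps : Set.MapsTo (circleMap (trinomialFactor a b)) (unitary F) (unitary F) :=
      fun u hu ↦ circleMap_mem_unitary hu (hne u hu)
    have hbij := ((Set.toFinite _).injOn_iff_bijOn_of_mapsTo hmaps).mp hinj
    obtain ⟨u, hu, hut⟩ := hbij.surjOn ht
    have ht0 := ne_zero_of_mem_unitary ht
    refine isSelfAdjointSquare_cubicLeadingCoeff_of_existsUnique hsq ⟨u / t, ⟨div_mem_unitary hu ht,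
      (circleMap_eq_iff_circleCubic_eq_zero ht hu (hne u hu)).mp hut⟩, ?_⟩
    rintro v ⟨hv, hv0⟩
    have hvt : v * t ∈ unitary F := mul_mem hv ht
    rw [← mul_div_cancel_right₀ v ht0,
      ← circleMap_eq_iff_circleCubic_eq_zero ht hvt (hne _ hvt)] at hv0
    exact (eq_div_iff ht0).mpr (hinj hvt hu (hv0.trans hut.symm))
  · intro hE
    have hne : ∀ u ∈ unitary F, trinomialFactor a b u ≠ 0 := fun u hu ↦
      trinomialFactor_ne_zero hu (hE (-u) (-(⟨u, hu⟩ : unitary F)).2).ne_zero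
    refine ⟨hne, fun u hu w hw huw ↦ ?_⟩
    have ht := circleMap_mem_unitary hw (hne w hw)
    set t := circleMap (trinomialFactor a b) w with htw
    have ht0 := ne_zero_of_mem_unitary ht
    exact (div_left_inj' ht0).mp <| circleCubic_root_unique (hE t ht)
      (div_mem_unitary hu ht) (div_mem_unitary hw ht)
      ((circleMap_eq_iff_circleCubic_eq_zero ht hu (hne u hu)).mp huw)
      ((circleMap_eq_iff_circleCubic_eq_zero ht hw (hne w hw)).mp htw.symm)

end Trinomial

section Criterion

variable {F : Type*} [Field F] [StarRing F]

/-- The element `1 - (b / a)^(q + 1)`, with `star` in the role of the `q`-th power. -/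
def normDefect (a b : F) : F := 1 - b / a * star (b / a)

lemma isSelfAdjoint_normDefect (a b : F) : IsSelfAdjoint (normDefect a b) :=
  (IsSelfAdjoint.one F).sub (.mul_star_self _)

variable {a b : F}

lemma normDefect_mul_mul_star (ha : a ≠ 0) :
    normDefect a b * (a * star a) = a * star a - b * star b := by
  have ha' : star a ≠ 0 := star_ne_zero.mpr ha
  rw [normDefect, star_div₀]
  field_simp

lemma normDefect_mul_sq (ha : a ≠ 0)
    (hab : star a * star b = a * (b * star b - a * star a)) :
    normDefect a b * a ^ 2 = -star b := by
  apply mul_left_cancel₀ (star_ne_zero.mpr ha)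
  linear_combination a * normDefect_mul_mul_star (b := b) ha + hab

lemma normDefect_mul_star_sq (ha : a ≠ 0)
    (hab : star a * star b = a * (b * star b - a * star a)) :
    normDefect a b * star a ^ 2 = -b := by
  simpa [(isSelfAdjoint_normDefect a b).star_eq] using congrArg star (normDefect_mul_sq ha hab)

lemma normDefect_sq_mul_mul_star (ha : a ≠ 0)
    (hab : star a * star b = a * (b * star b - a * star a)) :
    normDefect a b ^ 2 * (a * star a) = 1 - normDefect a b := by
  apply mul_left_cancel₀ (mul_ne_zero ha (star_ne_zero.mpr ha))
  linear_combination normDefect a b * star a ^ 2 * normDefect_mul_sq ha hab -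
    star b * normDefect_mul_star_sq ha hab + normDefect_mul_mul_star (b := b) ha

lemma normDefect_ne_zero (ha : a ≠ 0) (hb : b ≠ 0)
    (hab : star a * star b = a * (b * star b - a * star a)) : normDefect a b ≠ 0 := by
  intro h
  have := normDefect_mul_sq ha hab
  rw [h, zero_mul, eq_comm, neg_eq_zero, star_eq_zero] at this
  exact hb this

variable [CharP F 3]

lemma cubicLeadingCoeff_fiberCoeff_eq (ha : a ≠ 0) (hb : b ≠ 0)
    (hab : star a * star b = a * (b * star b - a * star a)) {t : F} (ht : t ∈ unitary F) :
    cubicLeadingCoeff (fiberCoeff a b t) =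
      normDefect a b * (star a * t + star (star a * t) - (normDefect a b)⁻¹) ^ 2 := by
  have ht0 := ne_zero_of_mem_unitary ht
  have hC := normDefect_ne_zero ha hb hab
  have h₁ := normDefect_mul_sq ha hab
  have h₂ := normDefect_mul_star_sq ha hab
  have h₃ := normDefect_sq_mul_mul_star ha hab
  simp only [cubicLeadingCoeff, fiberCoeff, star_sub, star_mul', star_star, star_pow,
    star_eq_inv_of_mem_unitary ht]
  set c := normDefect a b
  field_simp
  linear_combination (-c) * h₁ + (-c * t ^ 4) * h₂ - 2 * t ^ 2 * h₃ +
    (t ^ 2 * c - t ^ 2 + c * t * a + c * t ^ 3 * star a) * CharP.ofNat_eq_zero F 3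

/-- If `y + star y = (c ^ 2)⁻¹`, then `c ^ 2 * y` is a root of `(T + 1) ^ 2 - c ^ 2`, hence fixed by
`star`. So `2 * c ^ 2 * y = 1`, which forces `c = 0`. -/
lemma add_star_ne_inv_sq {c y : F} (hc0 : c ≠ 0) (hc : IsSelfAdjoint c)
    (hy : (c ^ 2) ^ 2 * (y * star y) = 1 - c ^ 2) : y + star y ≠ (c ^ 2)⁻¹ := by
  intro h
  have htrace : c ^ 2 * (y + star y) = 1 := by rw [h, mul_inv_cancel₀ (pow_ne_zero 2 hc0)]
  have hroot : (c ^ 2 * y + 1) ^ 2 = c ^ 2 := by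
    linear_combination c ^ 2 * y * htrace - hy + c ^ 2 * y * CharP.ofNat_eq_zero F 3
  have hfix : star (c ^ 2 * y + 1) = c ^ 2 * y + 1 := by
    rcases sq_eq_sq_iff_eq_or_eq_neg.mp hroot with h | h
    · rw [h, hc.star_eq]
    · rw [h, star_neg, hc.star_eq]
  rw [star_add, star_mul', star_pow, hc.star_eq, star_one] at hfix
  have hzero : c ^ 2 * y + 1 = 0 := by
    linear_combination hfix - htrace + c ^ 2 * y * CharP.ofNat_eq_zero F 3
  rw [hzero] at hroot
  exact pow_ne_zero 2 hc0 (by rw [← hroot]; ring)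

theorem forall_isSelfAdjointSquare_iff (ha : a ≠ 0) (hb : b ≠ 0)
    (hab : star a * star b = a * (b * star b - a * star a)) :
    (∀ t ∈ unitary F, IsSelfAdjointSquare (cubicLeadingCoeff (fiberCoeff a b t))) ↔
      IsSelfAdjointSquare (normDefect a b) := by
  have hself (t : F) : IsSelfAdjoint (star a * t + star (star a * t) - (normDefect a b)⁻¹) :=
    (IsSelfAdjoint.add_star_self _).sub (isSelfAdjoint_normDefect a b).inv₀
  constructor
  · intro h
    have h1 := h 1 (one_mem _)
    have hne := h1.ne_zero
    rw [cubicLeadingCoeff_fiberCoeff_eq ha hb hab (one_mem _)] at h1 hne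
    exact (isSelfAdjointSquare_mul_sq_iff (hself 1) fun h ↦ hne (by rw [h]; ring)).mp h1
  · intro hC t ht
    rw [cubicLeadingCoeff_fiberCoeff_eq ha hb hab ht]
    refine (isSelfAdjointSquare_mul_sq_iff (hself t) (sub_ne_zero.mpr ?_)).mpr hC
    have hnorm := normDefect_sq_mul_mul_star ha hab
    obtain ⟨c, hc0, hc, hcC⟩ := hC
    rw [hcC] at hnorm ⊢
    refine add_star_ne_inv_sq hc0 hc ?_
    rw [star_mul', star_star, ← hnorm]
    linear_combination (c ^ 2) ^ 2 * a * star a * Unitary.mul_star_self_of_mem ht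

end Criterion

section PowerCoefficients

variable {R : Type*} [CommSemiring R]

lemma coeff_pow_char_mul (p : ℕ) [ExpChar R p] (f : R[X]) (i : ℕ) :
    (f ^ p).coeff (i * p) = f.coeff i ^ p := by
  rw [← map_frobenius_expand, coeff_map, coeff_expand_mul (expChar_pos R p), frobenius_def]

lemma coeff_pow_char_of_not_dvd (p : ℕ) [ExpChar R p] (f : R[X]) {i : ℕ} (hi : ¬p ∣ i) :
    (f ^ p).coeff i = 0 := by
  rw [← map_frobenius_expand, coeff_map, coeff_expand (expChar_pos R p), if_neg hi, map_zero]

lemma coeff_one_pow (f : R[X]) (k : ℕ) :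
    (f ^ k).coeff 1 = k * f.coeff 0 ^ (k - 1) * f.coeff 1 := by
  have h := congrArg (coeff · 0) (derivative_pow f k)
  simpa [coeff_derivative, coeff_zero_eq_eval_zero (f ^ _), ← coeff_zero_eq_eval_zero f] using h

end PowerCoefficients

section FiberPolynomial

variable {R : Type*} [CommRing R]

lemma sum_coeff_add_mul_eq_zero {p : R[X]} {N j K : ℕ} (hj : j < N)
    (hdvd : X ^ N - 1 ∣ p) (hdeg : p.natDegree < j + K * N) :
    ∑ i ∈ Finset.range K, p.coeff (j + i * N) = 0 := by
  nontriviality R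
  obtain ⟨r, rfl⟩ := hdvd
  by_cases hr : r = 0
  · simp [hr]
  -- The sum telescopes to minus the coefficient of `X ^ (j + (K - 1) * N)` in the quotient `r`.
  have partial_sum (k : ℕ) :
      ∑ i ∈ Finset.range (k + 1), ((X ^ N - 1) * r).coeff (j + i * N) = -r.coeff (j + k * N) := by
    induction k with
    | zero => simp [sub_mul, coeff_X_pow_mul', hj.not_ge]
    | succ k ih =>
      rw [Finset.sum_range_succ, ih, sub_mul, one_mul, coeff_sub, add_one_mul, ← add_assoc,
        coeff_X_pow_mul]
      ring
  have hmonic : (X ^ N - 1 : R[X]).Monic := by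
    simpa using monic_X_pow_sub_C (1 : R) (by omega : N ≠ 0)
  have hN : (X ^ N - 1 : R[X]).natDegree = N := by
    simpa using natDegree_X_pow_sub_C (n := N) (r := (1 : R))
  rw [hmonic.natDegree_mul' hr, hN] at hdeg
  rcases K with _ | k
  · simp at hdeg ⊢
  · rw [partial_sum, coeff_eq_zero_of_natDegree_lt (by rw [add_one_mul] at hdeg; omega), neg_zero]

/-- The polynomial `t ^ 2 * (1 + a' * t + a / t - b * t ^ 2 - b' / t ^ 2)`. For `a' = star a` and
`b' = star b`, the second factor is `cubicLeadingCoeff (fiberCoeff a b t)` on the unit circle. -/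
noncomputable def fiberPoly (a b a' b' : R) : R[X] :=
  C (-b') + C a * X + X ^ 2 + C a' * X ^ 3 + C (-b) * X ^ 4

lemma natDegree_fiberPoly_le (a b a' b' : R) : (fiberPoly a b a' b').natDegree ≤ 4 := by
  rw [fiberPoly]
  compute_degree

lemma fiberPoly_sq (a b a' b' : R) :
    fiberPoly a b a' b' ^ 2 = C (b' ^ 2) + C (-2 * a * b') * X + C (a ^ 2 - 2 * b') * X ^ 2 +
      C (2 * (a - a' * b')) * X ^ 3 + C (1 + 2 * (a * a' + b * b')) * X ^ 4 +
      C (2 * (a' - a * b)) * X ^ 5 + C (a' ^ 2 - 2 * b) * X ^ 6 + C (-2 * a' * b) * X ^ 7 +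
      C (b ^ 2) * X ^ 8 := by
  simp only [fiberPoly, map_add, map_sub, map_mul, map_neg, map_pow, map_one, map_ofNat]
  ring

lemma coeff_two_fiberPoly_sq (a b a' b' : R) :
    (fiberPoly a b a' b' ^ 2).coeff 2 = a ^ 2 - 2 * b' := by
  rw [fiberPoly_sq]
  simp [-map_sub, -map_mul, -map_pow, -map_add, -map_neg]

lemma coeff_five_fiberPoly_sq (a b a' b' : R) :
    (fiberPoly a b a' b' ^ 2).coeff 5 = 2 * (a' - a * b) := by
  rw [fiberPoly_sq]
  simp [-map_sub, -map_mul, -map_pow, -map_add, -map_neg]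

lemma coeff_zero_fiberPoly (a b a' b' : R) : (fiberPoly a b a' b').coeff 0 = -b' := by
  simp [fiberPoly]

lemma coeff_one_fiberPoly (a b a' b' : R) : (fiberPoly a b a' b').coeff 1 = a := by
  simp [fiberPoly, -map_neg]

lemma eq_zero_of_dvd_fiberPoly_sub {a b a' b' : R}
    (hdvd : X ^ 4 - 1 ∣ fiberPoly a b a' b' - X ^ 2) : a = 0 := by
  have hdeg : (fiberPoly a b a' b' - X ^ 2).natDegree ≤ 4 := by
    rw [fiberPoly]
    compute_degree
  simpa only [Finset.sum_range_one, zero_mul, add_zero, coeff_sub, coeff_one_fiberPoly,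
    coeff_X_pow, OfNat.one_ne_ofNat, if_false, sub_zero] using
    sum_coeff_add_mul_eq_zero (j := 1) (K := 1) (by norm_num) hdvd (by omega)

/-- Modulo `X ^ (q + 1) - 1` the cube of `f ^ k` equals `f ^ 2 * X ^ (q - 1)`, and of the exponents
`3 * j`, `3 * j + q + 1` and `3 * j + 2 * (q + 1)` only the first is a multiple of `3`. -/
lemma coeff_pow_pow_three_eq [CharP R 3] {f : R[X]} (hf : f.natDegree ≤ 4) {q k j : ℕ}
    (hq : q + 3 = 6 * k) (hk : 2 ≤ k) (hj : j ≤ 1)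
    (hdvd : X ^ (q + 1) - 1 ∣ f ^ (3 * k - 2) - X ^ (q - 1)) :
    (f ^ k).coeff j ^ 3 = (f ^ 2).coeff (3 * j + 2) := by
  have hdvd' : X ^ (q + 1) - 1 ∣ (f ^ k) ^ 3 - f ^ 2 * X ^ (q - 1) := by
    convert hdvd.mul_left (f ^ 2) using 1
    rw [mul_sub, ← pow_add, ← pow_mul, show 2 + (3 * k - 2) = k * 3 by omega]
  have hf2 : (f ^ 2).natDegree ≤ 8 := natDegree_pow_le_of_le 2 hf
  have hdeg : ((f ^ k) ^ 3 - f ^ 2 * X ^ (q - 1)).natDegree < 3 * j + 3 * (q + 1) := by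
    refine (natDegree_sub_le_of_le (natDegree_pow_le_of_le 3 (natDegree_pow_le_of_le k hf))
      (natDegree_mul_le_of_le hf2 (natDegree_X_pow_le _))).trans_lt ?_
    omega
  have hsum := sum_coeff_add_mul_eq_zero (by omega) hdvd' hdeg
  have htop : (f ^ 2).coeff (3 * j + 2 * (q + 1) - (q - 1)) = 0 :=
    coeff_eq_zero_of_natDegree_lt (by omega)
  have hmid : 3 * j + 1 * (q + 1) - (q - 1) = 3 * j + 2 := by omega
  simp only [Finset.sum_range_succ, Finset.sum_range_zero, coeff_sub, coeff_mul_X_pow'] at hsum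
  rw [if_neg (by omega), if_pos (by omega), if_pos (by omega), htop, hmid,
    coeff_pow_char_of_not_dvd 3 _ (i := 3 * j + 1 * (q + 1)) (by omega),
    coeff_pow_char_of_not_dvd 3 _ (i := 3 * j + 2 * (q + 1)) (by omega),
    zero_mul, add_zero, mul_comm 3 j, coeff_pow_char_mul] at hsum
  rw [mul_comm 3 j]
  linear_combination hsum

theorem mul_eq_of_dvd_fiberPoly_pow_sub [CharP R 3] {a b a' b' : R} {q k : ℕ}
    (hq : q + 3 = 6 * k) (hk : 2 ≤ k) (hk' : (k : R) = -1) (hb : b' ^ q = b)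
    (hdvd : X ^ (q + 1) - 1 ∣ fiberPoly a b a' b' ^ (3 * k - 2) - X ^ (q - 1)) :
    a' * b' = a * (b * b' - a * a') := by
  have hP := natDegree_fiberPoly_le a b a' b'
  have hsucc : (-b') ^ k = -b' * (-b') ^ (k - 1) := by
    rw [← pow_succ', Nat.sub_add_cancel (by omega)]
  have h₀ : (-b' * (-b') ^ (k - 1)) ^ 3 = a ^ 2 - 2 * b' := by
    rw [← hsucc, ← coeff_zero_fiberPoly a b a' b', ← coeff_two_fiberPoly_sq a b a' b',
      coeff_zero_eq_eval_zero, ← eval_pow, ← coeff_zero_eq_eval_zero]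
    exact coeff_pow_pow_three_eq hP hq hk zero_le_one hdvd
  have h₁ : (-(-b') ^ (k - 1) * a) ^ 3 = 2 * (a' - a * b) := by
    rw [← coeff_five_fiberPoly_sq a b a' b', ← coeff_pow_pow_three_eq hP hq hk le_rfl hdvd,
      coeff_one_pow, coeff_zero_fiberPoly, coeff_one_fiberPoly, hk', neg_one_mul]
  have hpow : ((-b') ^ (k - 1)) ^ 6 * b' ^ 3 = b := by
    rw [← hb, ← pow_mul, Even.neg_pow (by simp [parity_simps]), ← pow_add]
    congr 1
    omega
  linear_combination (-(-b') ^ (k - 1) * a) ^ 3 * h₀ + (a ^ 2 - 2 * b') * h₁ - a ^ 3 * hpow +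
    (a ^ 2 * a' - a ^ 3 * b - a' * b' + a * b * b') * CharP.ofNat_eq_zero R 3

end FiberPolynomial

section FiniteField

variable {F : Type*} [Field F]

lemma X_pow_sub_one_dvd_of_forall_eval_eq_zero [Finite F] {N : ℕ} (hN : N ∣ Nat.card F - 1)
    {p : F[X]} (hp : ∀ t : F, t ^ N = 1 → p.eval t = 0) : X ^ N - 1 ∣ p := by
  obtain ⟨m, hm⟩ := hN
  have hcard : 0 < Nat.card F - 1 := Nat.sub_pos_of_lt Finite.one_lt_card
  have hN0 : 0 < N := Nat.pos_of_mul_pos_right (hm ▸ hcard)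
  obtain ⟨g, hg⟩ := IsCyclic.exists_ofOrder_eq_natCard (α := Fˣ)
  rw [Nat.card_units] at hg
  have hζ : IsPrimitiveRoot ((g : F) ^ m) N := by
    refine IsPrimitiveRoot.pow hcard ?_ (hm.trans (mul_comm N m))
    have hprim := (IsPrimitiveRoot.orderOf g).map_of_injective (f := Units.coeHom F)
      Units.val_injective
    rwa [hg] at hprim
  rw [X_pow_sub_one_eq_prod hN0 hζ]
  refine Finset.prod_dvd_of_coprime
    (fun _ _ _ _ ↦ (pairwise_coprime_X_sub_C Function.injective_id ·)) fun t ht ↦ ?_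
  exact dvd_iff_isRoot.mpr (hp t ((mem_nthRootsFinset hN0 _).mp ht))

/-- The involution `x ↦ x ^ (p ^ n)` of the field of order `(p ^ n) ^ 2`. -/
abbrev frobeniusStarRing [Fintype F] (p n : ℕ) [ExpChar F p]
    (hcard : Fintype.card F = (p ^ n) ^ 2) : StarRing F where
  star x := x ^ p ^ n
  star_involutive x := (pow_mul x _ _).symm.trans (by rw [← sq, ← hcard, FiniteField.pow_card])
  star_mul x y := by rw [mul_comm, mul_pow]
  star_add x y := add_pow_expChar_pow x y p n

variable [StarRing F] {q : ℕ}

lemma mem_unitary_iff_pow_eq_one (hstar : ∀ x : F, star x = x ^ q) {u : F} :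
    u ∈ unitary F ↔ u ^ (q + 1) = 1 := by
  rw [Unitary.mem_iff_self_mul_star, hstar, pow_succ']

lemma pow_sub_one_eq_star_div_self (hstar : ∀ x : F, star x = x ^ q) (hq : q ≠ 0) {x : F}
    (hx : x ≠ 0) : x ^ (q - 1) = star x / x := by
  rw [eq_div_iff hx, ← pow_succ, Nat.sub_add_cancel (Nat.pos_of_ne_zero hq), hstar]

lemma mul_trinomial_eq_mul_trinomialFactor (hstar : ∀ x : F, star x = x ^ q) (hq : q ≠ 0)
    (a b x : F) :
    x * (1 + a * x ^ (q * (q - 1)) + b * x ^ (2 * (q - 1))) =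
      x * trinomialFactor a b (star x / x) := by
  by_cases hx : x = 0
  · rw [hx, zero_mul, zero_mul]
  rw [trinomialFactor, mul_comm q, mul_comm 2, pow_mul, pow_mul,
    pow_sub_one_eq_star_div_self hstar hq hx, ← hstar, star_div₀, star_star, inv_div]

lemma exists_star_ne_self [Finite F] (hstar : ∀ x : F, star x = x ^ q)
    (hcard : Nat.card F = q ^ 2) : ∃ g : F, star g ≠ g := by
  have hq : 1 < q := (one_lt_pow_iff two_ne_zero).mp (hcard ▸ Finite.one_lt_card)
  have hlt : q - 1 < Nat.card Fˣ := by
    rw [Nat.card_units, hcard]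
    have hlt_sq := lt_self_pow₀ hq one_lt_two
    omega
  obtain ⟨g, hg⟩ := exists_pow_ne_one_of_isCyclic (by omega) hlt
  refine ⟨g, fun h ↦ hg (Units.ext ?_)⟩
  rw [Units.val_pow_eq_pow_val, pow_sub_one_eq_star_div_self hstar (by omega) g.ne_zero, h,
    div_self g.ne_zero, Units.val_one]

lemma isSquare_of_isSelfAdjoint [Fintype F] (hstar : ∀ x : F, star x = x ^ q)
    (hcard : Fintype.card F = q ^ 2) (hq : Odd q) {z : F} (hz : IsSelfAdjoint z) :
    IsSquare z := by
  by_cases hz0 : z = 0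
  · exact hz0 ▸ IsSquare.zero
  have hchar : ringChar F ≠ 2 := fun h ↦ by
    have heven := FiniteField.even_card_iff_char_two.mp h
    rw [hcard, ← Nat.even_iff] at heven
    exact Nat.not_even_iff_odd.mpr hq.pow heven
  have hhalf : q ^ 2 / 2 = (q - 1) * ((q + 1) / 2) := by
    obtain ⟨m, rfl⟩ := hq
    rw [Nat.add_sub_cancel, show (2 * m + 1 + 1) / 2 = m + 1 by omega]
    have hsq : (2 * m + 1) ^ 2 = 2 * (2 * m * (m + 1)) + 1 := by ring
    omega
  rw [FiniteField.isSquare_iff hchar hz0, hcard, hhalf, pow_mul,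
    pow_sub_one_eq_star_div_self hstar hq.pos.ne' hz0, hz.star_eq, div_self hz0, one_pow]

end FiniteField

section Necessity

variable {F : Type*} [Field F] [StarRing F]

lemma eval_fiberPoly_star (a b : F) {t : F} (ht : t ∈ unitary F) :
    (fiberPoly a b (star a) (star b)).eval t = t ^ 2 * cubicLeadingCoeff (fiberCoeff a b t) := by
  have ht0 := ne_zero_of_mem_unitary ht
  simp only [fiberPoly, cubicLeadingCoeff, fiberCoeff, eval_add, eval_mul, eval_pow, eval_C, eval_X,
    star_sub, star_mul', star_pow, star_star, star_eq_inv_of_mem_unitary ht]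
  field_simp
  ring

variable {q : ℕ} {a b : F}

/-- A nonzero square `c ^ 2` with `c ^ q = c` has `((q - 1) / 2)`-th power `1`. -/
theorem X_pow_sub_one_dvd_fiberPoly_pow_sub [Finite F] (hstar : ∀ x : F, star x = x ^ q)
    (hcard : Nat.card F = q ^ 2) {m : ℕ} (hm : q = 2 * m + 1)
    (h : ∀ t ∈ unitary F, IsSelfAdjointSquare (cubicLeadingCoeff (fiberCoeff a b t))) :
    X ^ (q + 1) - 1 ∣ fiberPoly a b (star a) (star b) ^ m - X ^ (q - 1) := by
  refine X_pow_sub_one_dvd_of_forall_eval_eq_zero ⟨q - 1, ?_⟩ fun t ht ↦ ?_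
  · rw [hcard, ← Nat.sq_sub_sq, one_pow]
  rw [← mem_unitary_iff_pow_eq_one hstar] at ht
  obtain ⟨c, hc0, hc, hE⟩ := h t ht
  have hc1 : c ^ (q - 1) = 1 := by
    rw [pow_sub_one_eq_star_div_self hstar (by omega) hc0, hc.star_eq, div_self hc0]
  rw [eval_sub, eval_pow, eval_pow, eval_X, eval_fiberPoly_star a b ht, hE, mul_pow, ← pow_mul,
    ← pow_mul, show 2 * m = q - 1 by omega, hc1, mul_one, sub_self]

theorem star_mul_star_eq_of_forall_isSelfAdjointSquare [Finite F] [CharP F 3] {n : ℕ}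
    (hstar : ∀ x : F, star x = x ^ 3 ^ n) (hcard : Nat.card F = (3 ^ n) ^ 2) (ha : a ≠ 0)
    (h : ∀ t ∈ unitary F, IsSelfAdjointSquare (cubicLeadingCoeff (fiberCoeff a b t))) :
    star a * star b = a * (b * star b - a * star a) := by
  rcases n with _ | _ | n
  · exact absurd hcard Finite.one_lt_card.ne'
  · have hdvd := X_pow_sub_one_dvd_fiberPoly_pow_sub hstar hcard (m := 1) rfl h
    simp only [zero_add, pow_one, Nat.reduceAdd, Nat.reduceSub] at hdvd
    exact absurd (eq_zero_of_dvd_fiberPoly_sub hdvd) ha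
  · obtain ⟨m, hm⟩ : Odd (3 ^ n) := Odd.pow (by decide)
    have hq : 3 ^ (n + 2) = 18 * m + 9 := by
      rw [pow_add, hm]
      ring
    have hk : ((3 * m + 2 : ℕ) : F) = -1 := by
      push_cast
      linear_combination (m + 1) * CharP.ofNat_eq_zero F 3
    exact mul_eq_of_dvd_fiberPoly_pow_sub (q := 3 ^ (n + 2)) (k := 3 * m + 2) (by omega)
      (by omega) hk (by rw [← hstar, star_star])
      (X_pow_sub_one_dvd_fiberPoly_pow_sub hstar hcard (by omega) h)

end Necessity

end PermTrinomial

open PermTrinomial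

/-- Main theorem, characteristic 3: For q = 3^n and a, b ∈ F_{q^2}^*,
f(X) = X(1 + aX^{q(q-1)} + bX^{2(q-1)}) permutes F_{q^2} iff
(ab)^q = a(b^{q+1} - a^{q+1}) and 1 - (b/a)^{q+1} is a nonzero square in F_q^*. -/
theorem stmt18 (n : ℕ) (hn : 0 < n)
    (F : Type*) [Field F] [Fintype F] (hcard : Fintype.card F = (3 ^ n) ^ 2)
    (a b : F) (ha : a ≠ 0) (hb : b ≠ 0) :
    Function.Bijective (fun x : F =>
        x * (1 + a * x ^ (3 ^ n * (3 ^ n - 1)) + b * x ^ (2 * (3 ^ n - 1))))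
      ↔ (a * b) ^ (3 ^ n) = a * (b ^ (3 ^ n + 1) - a ^ (3 ^ n + 1))
        ∧ ∃ c : F, c ≠ 0 ∧ c ^ (3 ^ n) = c
            ∧ 1 - (b / a) ^ (3 ^ n + 1) = c ^ 2 := by
  have : CharP F 3 := charP_of_card_eq_prime_pow (f := n * 2) (by rw [hcard, pow_mul])
  let _ : StarRing F := frobeniusStarRing 3 n hcard
  have hstar (x : F) : star x = x ^ 3 ^ n := rfl
  have hcard' : Nat.card F = (3 ^ n) ^ 2 := Nat.card_eq_fintype_card.trans hcard
  have hnorm (x : F) : x ^ (3 ^ n + 1) = x * star x := pow_succ' x (3 ^ n)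
  have hodd : Odd (3 ^ n) := Odd.pow (by decide)
  have hcond : (a * b) ^ 3 ^ n = a * (b ^ (3 ^ n + 1) - a ^ (3 ^ n + 1)) ↔
      star a * star b = a * (b * star b - a * star a) := by
    rw [hnorm, hnorm, ← hstar, star_mul']
  have hsquare : (∃ c : F, c ≠ 0 ∧ c ^ 3 ^ n = c ∧ 1 - (b / a) ^ (3 ^ n + 1) = c ^ 2) ↔
      IsSelfAdjointSquare (normDefect a b) := by
    rw [hnorm]
    rfl
  simp_rw [mul_trinomial_eq_mul_trinomialFactor hstar hodd.pos.ne']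
  rw [hcond, hsquare, bijective_trinomial_iff (exists_star_ne_self hstar hcard')
    fun _ ↦ isSquare_of_isSelfAdjoint hstar hcard hodd]
  constructor
  · intro h
    have hab := star_mul_star_eq_of_forall_isSelfAdjointSquare hstar hcard' ha h
    exact ⟨hab, (forall_isSelfAdjointSquare_iff ha hb hab).mp h⟩
  · rintro ⟨hab, h⟩
    exact (forall_isSelfAdjointSquare_iff ha hb hab).mpr h
end
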